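/- Let $1<p<2$ and $p\le q\le\infty$. Let $(\beta_k)_{k\in\mathbb{Z}}$ be a family of functions in $L^1(\mathbb{R}^d)$ with $\sup_k \|\beta_k\|_{L^1}\le A$ and $\sup_{\xi}\sum_{k\in\mathbb{Z}}|\widehat{\beta_k}(\xi)|\le B$. Then for any family $(f_k)_{k\in\mathbb{Z}}$ of measurable functions one has $\big\|\sum_k \beta_k * f_k\big\|_{L^{p,q}(\mathbb{R}^d)} \le C(p,q,A,B) \big(\sum_k \|f_k\|_{L^{p,q}}^p\big)^{1/p}$. -/

import Mathlib

open MeasureTheory ENNReal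
open scoped FourierTransform Convolution

/-- A dyadic version of the Lorentz space quasi-norm `‖f‖_{L^{p,q}(μ)}`,
with the convention that `q = ∞` gives the weak type quasi-norm. -/
noncomputable def lorentzNorm {α : Type*} [MeasurableSpace α] (μ : Measure α)
    (p : ℝ) (q : ℝ≥0∞) {E : Type*} [NormedAddCommGroup E] (f : α → E) : ℝ≥0∞ :=
  if q = ∞ then
    ⨆ m : ℤ, (2 : ℝ≥0∞) ^ m * (μ {x | (2 : ℝ) ^ m < ‖f x‖}) ^ (1 / p)
  else
    (∑' m : ℤ, ((2 : ℝ≥0∞) ^ m) ^ q.toReal *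
      (μ {x | (2 : ℝ) ^ m < ‖f x‖}) ^ (q.toReal / p)) ^ (1 / q.toReal)

/-!
Put `T (f_k) = ∑ β_k * f_k`. By Young's inequality `T` maps `ℓ¹(L¹)` to `L¹` with norm at most `A`,
and by Plancherel and Cauchy–Schwarz it maps `ℓ²(L²)` to `L²` with norm at most `B`: pointwise in
frequency, `|∑ β̂_k f̂_k|² ≤ (∑ |β̂_k|²) ∑ |f̂_k|² ≤ B² ∑ |f̂_k|²`. Regard the family `(f_k)` as a
single function on `ι × V`, so that both bounds concern ordinary Lebesgue spaces. Splitting this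
function at the height `t = 2 ^ m` controls the measure of `{|T f| > 2 ^ m}`; rescaled by
`2 ^ (m * p)`, the two contributions form a discrete convolution, in `m`, of the distribution
sequence of `f` with a kernel that is summable because `1 < p < 2`. As `p ≤ q`, Minkowski's
inequality in `ℓ^(q / p)` shows that `T` maps `L^{p,q}(ι × V)` to `L^{p,q}(V)`, and once more that
the norm of the family in `L^{p,q}(ι × V)` is at most `(∑ ‖f_k‖_{L^{p,q}} ^ p) ^ (1 / p)`.
-/

open Filter Set Topology

section Plancherel

variable {V F : Type*} [NormedAddCommGroup V] [InnerProductSpace ℝ V] [FiniteDimensional ℝ V]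
  [MeasurableSpace V] [BorelSpace V] [NormedAddCommGroup F] [InnerProductSpace ℂ F]

theorem continuous_fourier_of_integrable {f : V → F} (hf : Integrable f) : Continuous (𝓕 f) :=
  VectorFourier.fourierIntegral_continuous Real.continuous_fourierChar continuous_inner hf

variable [CompleteSpace F]

theorem coeFn_fourier_toLp {f : V → F} (hf₁ : Integrable f) (hf₂ : MemLp f 2) :
    ((𝓕 (hf₂.toLp f) : Lp (α := V) F 2) : V → F) =ᵐ[volume] 𝓕 f := by
  refine ae_eq_of_integral_contDiff_smul_eq ((Lp.memLp _).locallyIntegrable one_le_two)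
    (continuous_fourier_of_integrable hf₁).locallyIntegrable fun g hg hgc ↦ ?_
  let φ : SchwartzMap V ℂ := HasCompactSupport.toSchwartzMap (f := fun x ↦ (g x : ℂ))
    (hgc.comp_left (g := Complex.ofReal) rfl) (Complex.ofRealCLM.contDiff.comp hg)
  have hφ (v : V → F) : ∫ x, g x • v x = ∫ x, φ x • v x :=
    integral_congr_ae (Eventually.of_forall fun x ↦ (Complex.coe_smul (g x) (v x)).symm)
  have hdistrib := congrArg (fun T ↦ T φ) (Lp.fourier_toTemperedDistribution_eq (hf₂.toLp f))
  simp only [TemperedDistribution.fourier_apply, Lp.toTemperedDistribution_apply] at hdistrib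
  have hflip := VectorFourier.integral_fourierIntegral_smul_eq_flip (L := innerₗ V)
    Real.continuous_fourierChar continuous_inner (φ.integrable (μ := volume)) hf₁
  rw [flip_innerₗ] at hflip
  calc ∫ x, g x • (𝓕 (hf₂.toLp f) : Lp (α := V) F 2 volume) x
      = ∫ x, φ x • (𝓕 (hf₂.toLp f) : Lp (α := V) F 2 volume) x := hφ _
    _ = ∫ x, 𝓕 φ x • hf₂.toLp f x := hdistrib.symm
    _ = ∫ x, 𝓕 φ x • f x :=
        integral_congr_ae (hf₂.coeFn_toLp.mono fun x hx ↦ congrArg (𝓕 φ x • ·) hx)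
    _ = ∫ x, φ x • 𝓕 f x := by rw [SchwartzMap.fourier_coe]; exact hflip
    _ = ∫ x, g x • 𝓕 f x := (hφ _).symm

theorem lintegral_enorm_fourier_sq {f : V → F} (hf₁ : Integrable f) (hf₂ : MemLp f 2) :
    ∫⁻ ξ, ‖𝓕 f ξ‖ₑ ^ 2 = ∫⁻ x, ‖f x‖ₑ ^ 2 := by
  have hsq (g : V → F) : eLpNorm g 2 volume ^ 2 = ∫⁻ x, ‖g x‖ₑ ^ 2 := by
    simpa using eLpNorm_nnreal_pow_eq_lintegral (f := g) (μ := volume) (p := 2) two_ne_zero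
  rw [← hsq, ← hsq, ← eLpNorm_congr_ae (coeFn_fourier_toLp hf₁ hf₂),
    ← eLpNorm_congr_ae hf₂.coeFn_toLp, ← Lp.enorm_def, ← Lp.enorm_def, ← ofReal_norm,
    ← ofReal_norm, Lp.norm_fourier_eq]

end Plancherel

section Fatou

variable {α ι : Type*} [MeasurableSpace α] {μ : Measure α}

theorem lintegral_le_of_le_liminf {l : Filter ι} [l.NeBot] [l.IsCountablyGenerated]
    {f : α → ℝ≥0∞} {F : ι → α → ℝ≥0∞} (hF : ∀ i, AEMeasurable (F i) μ)
    (hf : ∀ x, f x ≤ liminf (F · x) l) {C : ℝ≥0∞} (hC : ∀ i, ∫⁻ x, F i x ∂μ ≤ C) :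
    ∫⁻ x, f x ∂μ ≤ C :=
  calc ∫⁻ x, f x ∂μ ≤ liminf (fun i ↦ ∫⁻ x, F i x ∂μ) l :=
        (lintegral_mono hf).trans (lintegral_liminf_le' hF)
    _ ≤ liminf (fun _ ↦ C) l := liminf_le_liminf (Eventually.of_forall hC)
    _ = C := liminf_const C

theorem aemeasurable_liminf {l : Filter ι} [Countable ι] [l.IsCountablyGenerated]
    {F : ι → α → ℝ≥0∞} (hF : ∀ i, AEMeasurable (F i) μ) :
    AEMeasurable (fun x ↦ liminf (F · x) l) μ := by
  obtain ⟨b, hb⟩ := l.exists_antitone_basis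
  refine ⟨fun x ↦ liminf (fun i ↦ (hF i).mk (F i) x) l,
    Measurable.liminf' (fun i ↦ (hF i).measurable_mk) ⟨hb.toHasBasis, to_countable _⟩
      fun _ ↦ to_countable _, ?_⟩
  filter_upwards [ae_all_iff.2 fun i ↦ (hF i).ae_eq_mk] with x hx
  simp only [hx]

variable [Countable ι] {E : Type*} [NormedAddCommGroup E]

/- An unconditional `∑'` of measurable functions need not be visibly measurable (it jumps to `0`
where the series diverges), so Chebyshev's inequality is applied to the liminf instead. -/
theorem rpow_mul_measure_lt_enorm_tsum_le {u : ι → α → E}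
    (hu : ∀ k, AEStronglyMeasurable (u k) μ) {b : ℝ} (hb : 0 < b) {C : ℝ≥0∞}
    (hC : ∀ s : Finset ι, ∫⁻ x, ‖∑ k ∈ s, u k x‖ₑ ^ b ∂μ ≤ C) (t : ℝ≥0∞) :
    t ^ b * μ {x | t < ‖∑' k, u k x‖ₑ} ≤ C := by
  set G : α → ℝ≥0∞ := fun x ↦ liminf (fun s : Finset ι ↦ ‖∑ k ∈ s, u k x‖ₑ ^ b) atTop
  have hmeas (s : Finset ι) : AEMeasurable (fun x ↦ ‖∑ k ∈ s, u k x‖ₑ ^ b) μ :=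
    (Finset.aestronglyMeasurable_fun_sum s fun k _ ↦ hu k).enorm.pow_const b
  have htsum (x : α) : ‖∑' k, u k x‖ₑ ^ b ≤ G x := by
    by_cases hsum : Summable (u · x)
    · exact (hsum.hasSum.enorm.ennrpow_const b).liminf_eq.ge
    · simp [tsum_eq_zero_of_not_summable hsum, hb]
  calc t ^ b * μ {x | t < ‖∑' k, u k x‖ₑ} ≤ t ^ b * μ {x | t ^ b ≤ G x} := by
        gcongr with x
        exact fun hx ↦ (rpow_le_rpow hx.le hb.le).trans (htsum x)
    _ ≤ ∫⁻ x, G x ∂μ := mul_meas_ge_le_lintegral₀ (aemeasurable_liminf hmeas) _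
    _ ≤ C := lintegral_le_of_le_liminf hmeas (fun _ ↦ le_rfl) hC

end Fatou

section Minkowski

variable {α ι : Type*} [MeasurableSpace α] {μ : Measure α} [Countable ι] {r : ℝ≥0∞}

theorem eLpNorm_tsum_le {u : ι → α → ℝ≥0∞} (hu : ∀ k, AEMeasurable (u k) μ) (hr : 1 ≤ r) :
    eLpNorm (fun x ↦ ∑' k, u k x) r μ ≤ ∑' k, eLpNorm (u k) r μ := by
  rcases eq_or_ne r ∞ with rfl | hr'
  · simp only [eLpNorm_exponent_top]
    refine eLpNormEssSup_le_of_ae_enorm_bound ?_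
    filter_upwards [ae_all_iff.2 fun k ↦ ae_le_eLpNormEssSup (f := u k) (μ := μ)] with x hx
    exact ENNReal.tsum_le_tsum hx
  have hr₀ : r ≠ 0 := (zero_lt_one.trans_le hr).ne'
  have eLpNorm_le_iff {v : α → ℝ≥0∞} {C : ℝ≥0∞} :
      eLpNorm v r μ ≤ C ↔ ∫⁻ x, v x ^ r.toReal ∂μ ≤ C ^ r.toReal := by
    rw [eLpNorm_eq_lintegral_rpow_enorm_toReal hr₀ hr', one_div,
      ENNReal.rpow_inv_le_iff (ENNReal.toReal_pos hr₀ hr')]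
    rfl
  rw [eLpNorm_le_iff]
  refine lintegral_le_of_le_liminf (l := atTop) (F := fun (s : Finset ι) x ↦
    (∑ k ∈ s, u k x) ^ r.toReal) (fun s ↦ (Finset.aemeasurable_fun_sum s fun k _ ↦
      hu k).pow_const _) (fun x ↦ ?_) fun s ↦ ?_
  · exact (ENNReal.summable.hasSum.ennrpow_const r.toReal).liminf_eq.ge
  · rw [← eLpNorm_le_iff]
    have hsum := eLpNorm_sum_le (s := s) (fun k _ ↦ (hu k).aestronglyMeasurable) hr
    rw [Finset.sum_fn] at hsum
    exact hsum.trans (ENNReal.sum_le_tsum s)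

theorem eLpNorm_tsum_mul_comp_le {b : α → ℝ≥0∞} (hb : AEMeasurable b μ) {T : ι → α → α}
    (hT : ∀ n, MeasurePreserving (T n) μ μ) (κ : ι → ℝ≥0∞) (hr : 1 ≤ r) :
    eLpNorm (fun x ↦ ∑' n, κ n * b (T n x)) r μ ≤ (∑' n, κ n) * eLpNorm b r μ := by
  have hbT (n : ι) : AEMeasurable (b ∘ T n) μ := hb.comp_quasiMeasurePreserving
    (hT n).quasiMeasurePreserving
  refine (eLpNorm_tsum_le (fun n ↦ (hbT n).const_mul (κ n)) hr).trans ?_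
  rw [← ENNReal.tsum_mul_right]
  gcongr with n
  rw [← eLpNorm_comp_measurePreserving hb.aestronglyMeasurable (hT n)]
  exact eLpNorm_le_mul_eLpNorm_of_ae_le_mul'' r (hbT n).aestronglyMeasurable
    (Eventually.of_forall fun x ↦ le_rfl)

end Minkowski

section DyadicDistribution

variable {α E : Type*} [MeasurableSpace α] {μ : Measure α} [NormedAddCommGroup E]

theorem two_rpow_mul_two_rpow (x y : ℝ) : (2 : ℝ≥0∞) ^ x * 2 ^ y = 2 ^ (x + y) :=
  (ENNReal.rpow_add x y two_ne_zero ofNat_ne_top).symm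

theorem lt_of_two_rpow_lt_two_rpow {x y : ℝ} (h : (2 : ℝ≥0∞) ^ x < 2 ^ y) : x < y :=
  lt_of_not_ge fun hyx ↦ h.not_ge (ENNReal.rpow_le_rpow_of_exponent_le one_le_two hyx)

theorem two_zpow_lt_norm_iff {z : E} {m : ℤ} :
    (2 : ℝ) ^ m < ‖z‖ ↔ (2 : ℝ≥0∞) ^ (m : ℝ) < ‖z‖ₑ := by
  rw [← ofReal_norm, ← ENNReal.ofReal_ofNat, ENNReal.ofReal_rpow_of_pos two_pos,
    Real.rpow_intCast, ENNReal.ofReal_lt_ofReal_iff_of_nonneg (by positivity)]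

theorem exists_enorm_mem_Ioc_two_rpow {z : E} (hz : z ≠ 0) :
    ∃ j : ℤ, ‖z‖ₑ ∈ Ioc ((2 : ℝ≥0∞) ^ (j : ℝ)) (2 ^ (j + 1 : ℝ)) := by
  obtain ⟨j, hj⟩ := ENNReal.exists_mem_Ioc_zpow (by simpa using hz) (enorm_ne_top (x := z))
    one_lt_two ofNat_ne_top
  exact ⟨j, by simpa [← ENNReal.rpow_intCast] using hj⟩

variable (μ) in
/-- The dyadic distribution sequence `2 ^ (m * p) * μ {‖f‖ > 2 ^ m}`, whose `ℓ^(q / p)` norm is the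
`p`-th power of the Lorentz norm of `f`. -/
noncomputable def dyadicDistrib (p : ℝ) (f : α → E) (m : ℤ) : ℝ≥0∞ :=
  2 ^ (m * p : ℝ) * μ {x | 2 ^ (m : ℝ) < ‖f x‖ₑ}

theorem lorentzNorm_rpow_eq {p : ℝ} (hp : 0 < p) {q : ℝ≥0∞} (hq : q ≠ 0) (f : α → E) :
    lorentzNorm μ p q f ^ p =
      eLpNorm (dyadicDistrib μ p f) (q / ENNReal.ofReal p) Measure.count := by
  have hp' : ENNReal.ofReal p ≠ 0 := by simpa using hp
  have hterm (m : ℤ) : ((2 : ℝ≥0∞) ^ m) ^ p * μ {x | (2 : ℝ) ^ m < ‖f x‖} =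
      dyadicDistrib μ p f m := by
    simp only [dyadicDistrib, two_zpow_lt_norm_iff, ENNReal.rpow_mul, ENNReal.rpow_intCast]
  unfold lorentzNorm
  split_ifs with hq'
  · rw [hq', ENNReal.top_div_of_ne_top ofReal_ne_top, eLpNorm_exponent_top, eLpNormEssSup_count,
      ← ENNReal.orderIsoRpow_apply p hp, OrderIso.map_iSup]
    refine iSup_congr fun m ↦ ?_
    rw [ENNReal.orderIsoRpow_apply, ENNReal.mul_rpow_of_nonneg _ _ hp.le, ← ENNReal.rpow_mul,
      one_div_mul_cancel hp.ne', ENNReal.rpow_one, hterm, enorm_eq_self]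
  · have hr : (q / ENNReal.ofReal p).toReal = q.toReal / p := by
      rw [ENNReal.toReal_div, ENNReal.toReal_ofReal hp.le]
    rw [eLpNorm_eq_lintegral_rpow_enorm_toReal (ENNReal.div_pos hq ofReal_ne_top).ne'
      (ENNReal.div_lt_top hq' hp').ne, lintegral_count, hr, ← ENNReal.rpow_mul]
    congr 1
    · refine tsum_congr fun m ↦ ?_
      rw [enorm_eq_self, ← hterm, ENNReal.mul_rpow_of_nonneg _ _ (by positivity),
        ← ENNReal.rpow_mul, mul_div_cancel₀ _ hp.ne']
    · field_simp

theorem two_rpow_mul_enorm_rpow_le_tsum {p a : ℝ} (ha : 0 < a) (m : ℤ) {z : E} {κ : ℤ → ℝ≥0∞}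
    (hκ : ∀ n : ℤ, ‖z‖ₑ ∈ Ioc ((2 : ℝ≥0∞) ^ (m + n : ℝ)) (2 ^ (m + n + 1 : ℝ)) →
      2 ^ (n * (a - p)) ≤ κ n) :
    2 ^ (m * (p - a)) * ‖z‖ₑ ^ a ≤ 2 ^ a * ∑' n : ℤ, κ n * (2 ^ ((m + n : ℤ) * p : ℝ) *
      (Ioi ((2 : ℝ≥0∞) ^ ((m + n : ℤ) : ℝ))).indicator 1 ‖z‖ₑ) := by
  rcases eq_or_ne z 0 with rfl | hz
  · simp [ha]
  obtain ⟨j, hj⟩ := exists_enorm_mem_Ioc_two_rpow hz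
  obtain ⟨n, rfl⟩ : ∃ n, j = m + n := ⟨j - m, by ring⟩
  have hindicator : (Ioi ((2 : ℝ≥0∞) ^ ((m + n : ℤ) : ℝ))).indicator 1 ‖z‖ₑ = (1 : ℝ≥0∞) :=
    indicator_of_mem (mem_Ioi.2 hj.1) 1
  push_cast at hj
  calc 2 ^ (m * (p - a)) * ‖z‖ₑ ^ a
      ≤ 2 ^ (m * (p - a)) * (2 ^ (m + n + 1 : ℝ)) ^ a := by gcongr; exact hj.2
    _ = 2 ^ a * (2 ^ (n * (a - p)) * 2 ^ ((m + n : ℤ) * p : ℝ)) := by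
      simp only [← ENNReal.rpow_mul, two_rpow_mul_two_rpow]
      push_cast
      ring_nf
    _ ≤ 2 ^ a * (κ n * (2 ^ ((m + n : ℤ) * p : ℝ) *
        (Ioi ((2 : ℝ≥0∞) ^ ((m + n : ℤ) : ℝ))).indicator 1 ‖z‖ₑ)) := by
      rw [hindicator, mul_one]
      gcongr
      exact hκ n hj
    _ ≤ _ := by gcongr; exact ENNReal.le_tsum n

variable [MeasurableSpace E] [OpensMeasurableSpace E] {f : α → E}

theorem two_rpow_mul_setLIntegral_le_tsum (hf : Measurable f) {p a : ℝ} (ha : 0 < a) (m : ℤ)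
    {s : Set α} {κ : ℤ → ℝ≥0∞}
    (hκ : ∀ x ∈ s, ∀ n : ℤ, ‖f x‖ₑ ∈ Ioc ((2 : ℝ≥0∞) ^ (m + n : ℝ)) (2 ^ (m + n + 1 : ℝ)) →
      2 ^ (n * (a - p)) ≤ κ n) :
    2 ^ (m * (p - a)) * ∫⁻ x in s, ‖f x‖ₑ ^ a ∂μ ≤
      2 ^ a * ∑' n, κ n * dyadicDistrib μ p f (m + n) := by
  set w : ℤ → α → ℝ≥0∞ := fun n x ↦ (Ioi ((2 : ℝ≥0∞) ^ ((m + n : ℤ) : ℝ))).indicator 1 ‖f x‖ₑ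
  have hw (n : ℤ) : Measurable (w n) :=
    (measurable_one.indicator measurableSet_Ioi).comp hf.enorm
  have hw_int (n : ℤ) : ∫⁻ x, w n x ∂μ = μ {x | 2 ^ ((m + n : ℤ) : ℝ) < ‖f x‖ₑ} :=
    lintegral_indicator_one (measurableSet_lt measurable_const hf.enorm)
  have hterm (n : ℤ) : Measurable fun x ↦ κ n * (2 ^ ((m + n : ℤ) * p : ℝ) * w n x) :=
    ((hw n).const_mul _).const_mul _
  calc 2 ^ (m * (p - a)) * ∫⁻ x in s, ‖f x‖ₑ ^ a ∂μ
      = ∫⁻ x in s, 2 ^ (m * (p - a)) * ‖f x‖ₑ ^ a ∂μ :=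
        (lintegral_const_mul _ (hf.enorm.pow_const a)).symm
    _ ≤ ∫⁻ x in s, 2 ^ a * ∑' n : ℤ, κ n * (2 ^ ((m + n : ℤ) * p : ℝ) * w n x) ∂μ :=
        setLIntegral_mono ((Measurable.tsum hterm).const_mul _) fun x hx ↦
          two_rpow_mul_enorm_rpow_le_tsum ha m (hκ x hx)
    _ ≤ ∫⁻ x, 2 ^ a * ∑' n : ℤ, κ n * (2 ^ ((m + n : ℤ) * p : ℝ) * w n x) ∂μ :=
        setLIntegral_le_lintegral _ _
    _ = 2 ^ a * ∑' n, κ n * dyadicDistrib μ p f (m + n) := by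
        rw [lintegral_const_mul _ (.tsum hterm), lintegral_tsum fun n ↦ (hterm n).aemeasurable]
        simp only [lintegral_const_mul _ ((hw _).const_mul _), lintegral_const_mul _ (hw _),
          hw_int, dyadicDistrib]

end DyadicDistribution

section Interpolation

/-- The kernel `min (2 ^ (n * (a - p))) (2 ^ (n * (b - p)))` on `ℤ` that arises when interpolating
between `L^a` and `L^b` to obtain `L^p`, `a < p < b`: level sets of `f` at height `2 ^ (m + n)`
influence those of the image of `f` at height `2 ^ m` with this weight. -/
noncomputable def interpolationKernel (a b p : ℝ) (n : ℤ) : ℝ≥0∞ :=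
  2 ^ min (n * (a - p)) (n * (b - p))

variable {a b p : ℝ}

theorem tsum_interpolationKernel_ne_top (hap : a < p) (hpb : p < b) :
    ∑' n, interpolationKernel a b p n ≠ ∞ := by
  set δ : ℝ := min (p - a) (b - p)
  have hδ : 0 < δ := lt_min (sub_pos.2 hap) (sub_pos.2 hpb)
  set θ : ℝ := 2 ^ (-δ)
  have hgeom : Summable fun n : ℕ ↦ θ ^ n := summable_geometric_of_lt_one (by positivity)
    (Real.rpow_lt_one_of_one_lt_of_neg one_lt_two (neg_neg_of_pos hδ))
  have hsum : Summable fun n : ℤ ↦ θ ^ n.natAbs :=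
    summable_int_iff_summable_nat_and_neg.2 ⟨by simpa using hgeom, by simpa using hgeom⟩
  refine ne_top_of_le_ne_top hsum.tsum_ofReal_ne_top (ENNReal.tsum_le_tsum fun n ↦ ?_)
  have hθ : θ ^ n.natAbs = 2 ^ (-(δ * |(n : ℝ)|)) := by
    rw [← Real.rpow_natCast, ← Real.rpow_mul two_pos.le, Nat.cast_natAbs, Int.cast_abs, neg_mul]
  rw [hθ, ← ENNReal.ofReal_rpow_of_pos two_pos, ENNReal.ofReal_ofNat, interpolationKernel]
  refine ENNReal.rpow_le_rpow_of_exponent_le one_le_two ?_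
  rcases le_total 0 (n : ℝ) with hn | hn
  · rw [abs_of_nonneg hn]
    nlinarith [min_le_left (n * (a - p)) (n * (b - p)), min_le_left (p - a) (b - p)]
  · rw [abs_of_nonpos hn]
    nlinarith [min_le_right (n * (a - p)) (n * (b - p)), min_le_right (p - a) (b - p)]

theorem rpow_le_interpolationKernel_of_nonneg (hab : a ≤ b) {n : ℤ} (hn : 0 ≤ n) :
    2 ^ (n * (a - p)) ≤ interpolationKernel a b p n := by
  exact ENNReal.rpow_le_rpow_of_exponent_le one_le_two (le_min le_rfl (by gcongr))

theorem rpow_le_interpolationKernel_of_nonpos (hab : a ≤ b) {n : ℤ} (hn : n ≤ 0) :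
    2 ^ (n * (b - p)) ≤ interpolationKernel a b p n := by
  have hn' : (n : ℝ) ≤ 0 := by exact_mod_cast hn
  exact ENNReal.rpow_le_rpow_of_exponent_le one_le_two
    (le_min (mul_le_mul_of_nonpos_left (by gcongr) hn') le_rfl)

variable {α γ E E' : Type*} [MeasurableSpace α] {μ : Measure α} [MeasurableSpace γ]
  {ν : Measure γ} [NormedAddCommGroup E] [MeasurableSpace E] [OpensMeasurableSpace E]
  [NormedAddCommGroup E'] {f : α → E} {F : γ → E'} {c₀ c₁ : ℝ≥0∞}

theorem two_rpow_mul_setLIntegral_lt_le (hf : Measurable f) (ha : 0 < a) (hab : a ≤ b) (m : ℤ) :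
    2 ^ (m * (p - a)) * ∫⁻ x in {x | 2 ^ (m : ℝ) < ‖f x‖ₑ}, ‖f x‖ₑ ^ a ∂μ ≤
      2 ^ a * ∑' n, interpolationKernel a b p n * dyadicDistrib μ p f (m + n) := by
  refine two_rpow_mul_setLIntegral_le_tsum hf ha m fun x hx n hn ↦
    rpow_le_interpolationKernel_of_nonneg hab ?_
  have hlt := lt_of_two_rpow_lt_two_rpow (hx.trans_le hn.2)
  have hlt' : m < m + n + 1 := by exact_mod_cast hlt
  lia

theorem two_rpow_mul_setLIntegral_le_le (hf : Measurable f) (hb : 0 < b) (hab : a ≤ b) (m : ℤ) :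
    2 ^ (m * (p - b)) * ∫⁻ x in {x | ‖f x‖ₑ ≤ 2 ^ (m : ℝ)}, ‖f x‖ₑ ^ b ∂μ ≤
      2 ^ b * ∑' n, interpolationKernel a b p n * dyadicDistrib μ p f (m + n) := by
  refine two_rpow_mul_setLIntegral_le_tsum hf hb m fun x hx n hn ↦
    rpow_le_interpolationKernel_of_nonpos hab ?_
  have hlt := lt_of_two_rpow_lt_two_rpow (hn.1.trans_le hx)
  have hlt' : m + n < m := by exact_mod_cast hlt
  lia

/-- `F` is dominated by the truncations of `f`: the measure of `{t < ‖F‖}` is at most the sum of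
the bounds that Chebyshev's inequality gives for the image of `f 1_{‖f‖ > t}` under an operator
bounded on `L^a`, and of `f 1_{‖f‖ ≤ t}` under one bounded on `L^b`. -/
def TruncationBound (μ : Measure α) (ν : Measure γ) (a b : ℝ) (c₀ c₁ : ℝ≥0∞) (f : α → E)
    (F : γ → E') : Prop :=
  ∀ t : ℝ≥0∞, t ≠ 0 → t ≠ ∞ →
    ν {y | t < ‖F y‖ₑ} ≤ c₀ * t ^ (-a) * ∫⁻ x in {x | t < ‖f x‖ₑ}, ‖f x‖ₑ ^ a ∂μ +
      c₁ * t ^ (-b) * ∫⁻ x in {x | ‖f x‖ₑ ≤ t}, ‖f x‖ₑ ^ b ∂μ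

theorem dyadicDistrib_le_of_truncationBound (hf : Measurable f) (ha : 0 < a) (hab : a ≤ b)
    (h : TruncationBound μ ν a b c₀ c₁ f F) (m : ℤ) :
    dyadicDistrib ν p F m ≤ (2 ^ a * c₀ + 2 ^ b * c₁) *
      ∑' n, interpolationKernel a b p n * dyadicDistrib μ p f (m + n) := by
  set S := ∑' n, interpolationKernel a b p n * dyadicDistrib μ p f (m + n)
  set t : ℝ≥0∞ := 2 ^ (m : ℝ)
  set I := ∫⁻ x in {x | t < ‖f x‖ₑ}, ‖f x‖ₑ ^ a ∂μ
  set J := ∫⁻ x in {x | ‖f x‖ₑ ≤ t}, ‖f x‖ₑ ^ b ∂μ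
  have hpow (c : ℝ) : 2 ^ (m * p) * t ^ (-c) = (2 : ℝ≥0∞) ^ (m * (p - c)) := by
    rw [← ENNReal.rpow_mul, two_rpow_mul_two_rpow]
    ring_nf
  calc 2 ^ (m * p) * ν {y | t < ‖F y‖ₑ}
      ≤ 2 ^ (m * p) * (c₀ * t ^ (-a) * I + c₁ * t ^ (-b) * J) := by
        gcongr
        exact h t (ENNReal.rpow_pos two_pos ofNat_ne_top).ne'
          (ENNReal.rpow_ne_top_of_ne_zero two_ne_zero ofNat_ne_top)
    _ = c₀ * (2 ^ (m * p) * t ^ (-a) * I) + c₁ * (2 ^ (m * p) * t ^ (-b) * J) := by ring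
    _ ≤ c₀ * (2 ^ a * S) + c₁ * (2 ^ b * S) := by
        rw [hpow, hpow]
        gcongr c₀ * ?_ + c₁ * ?_
        · exact two_rpow_mul_setLIntegral_lt_le hf ha hab m
        · exact two_rpow_mul_setLIntegral_le_le hf (ha.trans_le hab) hab m
    _ = (2 ^ a * c₀ + 2 ^ b * c₁) * S := by ring

theorem lorentzNorm_le_of_truncationBound (hf : Measurable f) (ha : 0 < a) (hab : a ≤ b)
    (hp : 0 < p) {q : ℝ≥0∞} (hpq : ENNReal.ofReal p ≤ q)
    (h : TruncationBound μ ν a b c₀ c₁ f F) :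
    lorentzNorm ν p q F ≤ ((2 ^ a * c₀ + 2 ^ b * c₁) * ∑' n, interpolationKernel a b p n) ^ (1 / p)
      * lorentzNorm μ p q f := by
  have hq : q ≠ 0 := ((ENNReal.ofReal_pos.2 hp).trans_le hpq).ne'
  have hr : 1 ≤ q / ENNReal.ofReal p := by
    rwa [ENNReal.le_div_iff_mul_le (by simp [hp]) (by simp), one_mul]
  rw [← ENNReal.rpow_le_rpow_iff hp, ENNReal.mul_rpow_of_nonneg _ _ hp.le, ← ENNReal.rpow_mul,
    one_div_mul_cancel hp.ne', ENNReal.rpow_one, lorentzNorm_rpow_eq hp hq,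
    lorentzNorm_rpow_eq hp hq, mul_assoc]
  refine (eLpNorm_le_mul_eLpNorm_of_ae_le_mul''
    (g := fun m ↦ ∑' n, interpolationKernel a b p n * dyadicDistrib μ p f (m + n)) _
    (measurable_of_countable _).aestronglyMeasurable
    (Eventually.of_forall (dyadicDistrib_le_of_truncationBound hf ha hab h))).trans ?_
  gcongr
  exact eLpNorm_tsum_mul_comp_le (measurable_of_countable _).aemeasurable
    (fun n ↦ measurePreserving_add_right Measure.count n) _ hr

end Interpolation

section Product

variable {ι α E : Type*} [MeasurableSpace ι] [MeasurableSingletonClass ι]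
  [MeasurableSpace α] {μ : Measure α} [SFinite μ] [NormedAddCommGroup E] [MeasurableSpace E]
  [OpensMeasurableSpace E] {f : ι × α → E}

theorem dyadicDistrib_count_prod (hf : Measurable f) (p : ℝ) (m : ℤ) :
    dyadicDistrib (Measure.count.prod μ) p f m =
      ∑' k, dyadicDistrib μ p (fun x ↦ f (k, x)) m := by
  simp only [dyadicDistrib]
  rw [Measure.prod_apply (measurableSet_lt measurable_const hf.enorm), lintegral_count,
    ENNReal.tsum_mul_left]
  rfl

theorem lorentzNorm_count_prod_le [Countable ι] (hf : Measurable f) {p : ℝ} (hp : 0 < p)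
    {q : ℝ≥0∞} (hpq : ENNReal.ofReal p ≤ q) :
    lorentzNorm (Measure.count.prod μ) p q f ≤
      (∑' k, lorentzNorm μ p q (fun x ↦ f (k, x)) ^ p) ^ (1 / p) := by
  have hq : q ≠ 0 := ((ENNReal.ofReal_pos.2 hp).trans_le hpq).ne'
  have hr : 1 ≤ q / ENNReal.ofReal p := by
    rwa [ENNReal.le_div_iff_mul_le (by simp [hp]) (by simp), one_mul]
  rw [one_div, ENNReal.le_rpow_inv_iff hp]
  simp only [lorentzNorm_rpow_eq hp hq]
  rw [funext (dyadicDistrib_count_prod hf p)]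
  exact eLpNorm_tsum_le (fun _ ↦ (measurable_of_countable _).aemeasurable) hr

end Product

section Convolution

variable {𝕜 E E' F G : Type*} [NontriviallyNormedField 𝕜] [NormedAddCommGroup E] [NormedSpace 𝕜 E]
  [NormedAddCommGroup E'] [NormedSpace 𝕜 E'] [NormedAddCommGroup F] [NormedSpace 𝕜 F]
  [MeasurableSpace G] [AddCommGroup G] {μ : Measure G} (L : E →L[𝕜] E' →L[𝕜] F)
  {f : G → E} {g : G → E'} {M : ℝ}

theorem norm_convolution_le_of_bounded [NormedSpace ℝ F] (hf : Integrable f μ)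
    (hM : ∀ x, ‖g x‖ ≤ M) (x : G) :
    ‖(f ⋆[L, μ] g) x‖ ≤ ∫ t, ‖L‖ * ‖f t‖ * M ∂μ :=
  norm_integral_le_of_norm_le ((hf.norm.const_mul _).mul_const M) <|
    Eventually.of_forall fun t ↦ L.le_of_opNorm₂_le_of_le le_rfl le_rfl (hM (x - t))

variable [MeasurableAdd₂ G] [MeasurableNeg G] [SFinite μ] [μ.IsAddLeftInvariant]

theorem convolutionExistsAt_of_bounded (hf : Integrable f μ) (hg : AEStronglyMeasurable g μ)
    (hM : ∀ x, ‖g x‖ ≤ M) (x : G) : ConvolutionExistsAt f g x L μ :=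
  BddAbove.convolutionExistsAt (s := univ) L ⟨M, forall_mem_image.2 fun y _ ↦ hM y⟩ .univ
    (subset_univ _) hf.integrableOn hg

variable [NormedSpace ℝ F]

theorem aestronglyMeasurable_convolution (hf : AEStronglyMeasurable f μ)
    (hg : AEStronglyMeasurable g μ) : AEStronglyMeasurable (f ⋆[L, μ] g) μ :=
  (hf.convolution_integrand L hg).integral_prod_right'

theorem lintegral_enorm_convolution_le (hf : AEStronglyMeasurable f μ)
    (hg : AEStronglyMeasurable g μ) :
    ∫⁻ x, ‖(f ⋆[L, μ] g) x‖ₑ ∂μ ≤ ‖L‖ₑ * (∫⁻ x, ‖f x‖ₑ ∂μ) * ∫⁻ x, ‖g x‖ₑ ∂μ :=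
  calc ∫⁻ x, ‖(f ⋆[L, μ] g) x‖ₑ ∂μ
      ≤ ∫⁻ x, ∫⁻ t, ‖L (f t) (g (x - t))‖ₑ ∂μ ∂μ :=
        lintegral_mono fun x ↦ enorm_integral_le_lintegral_enorm _
    _ = ∫⁻ t, ∫⁻ x, ‖L (f t) (g (x - t))‖ₑ ∂μ ∂μ :=
        lintegral_lintegral_swap (hf.convolution_integrand L hg).enorm
    _ ≤ ∫⁻ t, ∫⁻ x, ‖L‖ₑ * ‖f t‖ₑ * ‖g (x - t)‖ₑ ∂μ ∂μ := by
        gcongr with t x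
        exact L.le_opENorm₂ _ _
    _ = ∫⁻ t, ‖L‖ₑ * ‖f t‖ₑ * ∫⁻ x, ‖g x‖ₑ ∂μ ∂μ := by
        refine lintegral_congr fun t ↦ ?_
        rw [lintegral_const_mul' _ _ (ENNReal.mul_ne_top enorm_ne_top enorm_ne_top),
          lintegral_sub_right_eq_self (fun x ↦ ‖g x‖ₑ) t]
    _ = ‖L‖ₑ * (∫⁻ x, ‖f x‖ₑ ∂μ) * ∫⁻ x, ‖g x‖ₑ ∂μ := by
        rw [lintegral_mul_const'' _ (hf.enorm.const_mul _), lintegral_const_mul'' _ hf.enorm]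

theorem tendsto_convolution_of_bounded {u : ℕ → G → E'} (hf : Integrable f μ)
    (hu : ∀ n, AEStronglyMeasurable (u n) μ) (hM : ∀ n x, ‖u n x‖ ≤ M)
    (hlim : ∀ x, Tendsto (u · x) atTop (𝓝 (g x))) (x : G) :
    Tendsto (fun n ↦ (f ⋆[L, μ] u n) x) atTop (𝓝 ((f ⋆[L, μ] g) x)) :=
  tendsto_integral_of_dominated_convergence (fun t ↦ ‖L‖ * ‖f t‖ * M)
    (fun n ↦ (convolutionExistsAt_of_bounded L hf (hu n) (hM n) x).aestronglyMeasurable)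
    ((hf.norm.const_mul _).mul_const M)
    (fun n ↦ Eventually.of_forall fun t ↦ L.le_of_opNorm₂_le_of_le le_rfl le_rfl (hM n (x - t)))
    (Eventually.of_forall fun t ↦ ((L (f t)).continuous.tendsto _).comp (hlim (x - t)))

end Convolution

section Orthogonality

variable {V ι : Type*} [NormedAddCommGroup V] [InnerProductSpace ℝ V] [FiniteDimensional ℝ V]
  [MeasurableSpace V] [BorelSpace V]

theorem memLp_two_of_integrable_of_bounded {α E : Type*} [MeasurableSpace α] {μ : Measure α}
    [NormedAddCommGroup E] {f : α → E} (hf : Integrable f μ) {M : ℝ} (hM : ∀ x, ‖f x‖ ≤ M) :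
    MemLp f 2 μ := by
  rw [memLp_two_iff_integrable_sq_norm hf.aestronglyMeasurable]
  simp only [sq]
  exact hf.norm.mul_bdd hf.aestronglyMeasurable.norm
    (Eventually.of_forall fun x ↦ (norm_norm (f x)).trans_le (hM x))

theorem enorm_sum_mul_sq_le {𝕜 : Type*} [NormedDivisionRing 𝕜] (s : Finset ι) (b c : ι → 𝕜) :
    ‖∑ k ∈ s, b k * c k‖ₑ ^ 2 ≤ (∑ k ∈ s, ‖b k‖ₑ) ^ 2 * ∑ k ∈ s, ‖c k‖ₑ ^ 2 := by
  simp only [enorm_eq_nnnorm]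
  norm_cast
  calc ‖∑ k ∈ s, b k * c k‖₊ ^ 2 ≤ (∑ k ∈ s, ‖b k‖₊ * ‖c k‖₊) ^ 2 := by
        gcongr
        exact (nnnorm_sum_le _ _).trans_eq (by simp only [nnnorm_mul])
    _ ≤ (∑ k ∈ s, ‖b k‖₊ ^ 2) * ∑ k ∈ s, ‖c k‖₊ ^ 2 := Finset.sum_mul_sq_le_sq_mul_sq _ _ _
    _ ≤ (∑ k ∈ s, ‖b k‖₊) ^ 2 * ∑ k ∈ s, ‖c k‖₊ ^ 2 := by
        gcongr
        exact Finset.sum_sq_le_sq_sum_of_nonneg fun _ _ ↦ zero_le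

theorem fourier_sum_mul_convolution {β f : ι → V → ℂ} (s : Finset ι)
    (hβ : ∀ k, Integrable (β k)) (hf : ∀ k, Integrable (f k)) (ξ : V) :
    𝓕 (fun x ↦ ∑ k ∈ s, (β k ⋆[ContinuousLinearMap.mul ℂ ℂ] f k) x) ξ =
      ∑ k ∈ s, 𝓕 (β k) ξ * 𝓕 (f k) ξ := by
  have hint (k : ι) := (Real.fourierIntegral_convergent_iff ξ).2
    ((hβ k).integrable_convolution (ContinuousLinearMap.mul ℂ ℂ) (hf k))
  simp only [← fun k ↦ Real.fourier_mul_convolution_eq (hβ k) (hf k)]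
  simp only [Real.fourier_eq, Finset.smul_sum]
  exact integral_finsetSum s fun k _ ↦ hint k

variable {β f : ι → V → ℂ} {B : ℝ≥0∞} {M : ℝ}

theorem lintegral_enorm_sum_convolution_sq_le_of_integrable (s : Finset ι)
    (hβ : ∀ k, Integrable (β k)) (hB : ∀ ξ, ∑ k ∈ s, ‖𝓕 (β k) ξ‖ₑ ≤ B)
    (hf : ∀ k, Integrable (f k)) (hM : ∀ k x, ‖f k x‖ ≤ M) :
    ∫⁻ x, ‖∑ k ∈ s, (β k ⋆[ContinuousLinearMap.mul ℂ ℂ] f k) x‖ₑ ^ 2 ≤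
      B ^ 2 * ∑ k ∈ s, ∫⁻ x, ‖f k x‖ₑ ^ 2 := by
  have hsum : Integrable fun x ↦ ∑ k ∈ s, (β k ⋆[ContinuousLinearMap.mul ℂ ℂ] f k) x :=
    integrable_finsetSum s fun k _ ↦ (hβ k).integrable_convolution _ (hf k)
  have hsum₂ := memLp_two_of_integrable_of_bounded hsum fun x ↦ norm_sum_le_of_le s fun k _ ↦
    norm_convolution_le_of_bounded (ContinuousLinearMap.mul ℂ ℂ) (hβ k) (hM k) x
  have hmeas (k : ι) : AEMeasurable fun ξ ↦ ‖𝓕 (f k) ξ‖ₑ ^ 2 :=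
    (continuous_fourier_of_integrable (hf k)).measurable.enorm.pow_const 2 |>.aemeasurable
  calc ∫⁻ x, ‖∑ k ∈ s, (β k ⋆[ContinuousLinearMap.mul ℂ ℂ] f k) x‖ₑ ^ 2
      = ∫⁻ ξ, ‖∑ k ∈ s, 𝓕 (β k) ξ * 𝓕 (f k) ξ‖ₑ ^ 2 := by
        simp only [← lintegral_enorm_fourier_sq hsum hsum₂, fourier_sum_mul_convolution s hβ hf]
    _ ≤ ∫⁻ ξ, B ^ 2 * ∑ k ∈ s, ‖𝓕 (f k) ξ‖ₑ ^ 2 := by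
        refine lintegral_mono fun ξ ↦ (enorm_sum_mul_sq_le s _ _).trans ?_
        gcongr
        exact hB ξ
    _ = B ^ 2 * ∑ k ∈ s, ∫⁻ ξ, ‖𝓕 (f k) ξ‖ₑ ^ 2 := by
        rw [lintegral_const_mul'' _ (Finset.aemeasurable_fun_sum s fun k _ ↦ hmeas k),
          lintegral_finsetSum' s fun k _ ↦ hmeas k]
    _ = B ^ 2 * ∑ k ∈ s, ∫⁻ x, ‖f k x‖ₑ ^ 2 := by
        simp only [fun k ↦ lintegral_enorm_fourier_sq (hf k)
          (memLp_two_of_integrable_of_bounded (hf k) (hM k))]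

theorem lintegral_enorm_sum_convolution_sq_le (s : Finset ι) (hβ : ∀ k, Integrable (β k))
    (hB : ∀ ξ, ∑ k ∈ s, ‖𝓕 (β k) ξ‖ₑ ≤ B) (hf : ∀ k, AEStronglyMeasurable (f k))
    (hM : ∀ k x, ‖f k x‖ ≤ M) :
    ∫⁻ x, ‖∑ k ∈ s, (β k ⋆[ContinuousLinearMap.mul ℂ ℂ] f k) x‖ₑ ^ 2 ≤
      B ^ 2 * ∑ k ∈ s, ∫⁻ x, ‖f k x‖ₑ ^ 2 := by
  set ball : ℕ → Set V := fun n ↦ Metric.closedBall 0 n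
  have hball (n : ℕ) : MeasurableSet (ball n) := measurableSet_closedBall
  set u : ℕ → ι → V → ℂ := fun n k ↦ (ball n).indicator (f k)
  have hu_le (n : ℕ) (k : ι) (x : V) : ‖u n k x‖ ≤ ‖f k x‖ := norm_indicator_le_norm_self _ _
  have huM (n : ℕ) (k : ι) (x : V) : ‖u n k x‖ ≤ M := (hu_le n k x).trans (hM k x)
  have hu (n : ℕ) (k : ι) : Integrable (u n k) :=
    (integrable_indicator_iff (hball n)).2 <| Measure.integrableOn_of_bounded
      measure_closedBall_lt_top.ne (hf k) (Eventually.of_forall (hM k))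
  have hu_lim (k : ι) (x : V) : Tendsto (fun n ↦ u n k x) atTop (𝓝 (f k x)) := by
    have hmono : Monotone ball := fun m n hmn ↦
      Metric.closedBall_subset_closedBall (Nat.cast_le.2 hmn)
    simpa only [ball, Metric.iUnion_closedBall_nat, indicator_univ] using
      (hmono.tendsto_indicator ball (f k) x).mono_right (pure_le_nhds _)
  have hconv_lim (x : V) :=
    (ENNReal.continuous_pow 2).tendsto _ |>.comp <| (tendsto_finsetSum s fun k _ ↦
      tendsto_convolution_of_bounded (ContinuousLinearMap.mul ℂ ℂ) (hβ k)
        (fun n ↦ (hu n k).aestronglyMeasurable) (huM · k) (hu_lim k) x).enorm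
  refine lintegral_le_of_le_liminf (fun n ↦ ?_) (fun x ↦ (hconv_lim x).liminf_eq.ge) fun n ↦ ?_
  · exact (Finset.aestronglyMeasurable_fun_sum s fun k _ ↦ aestronglyMeasurable_convolution _
      (hβ k).aestronglyMeasurable (hu n k).aestronglyMeasurable).enorm.pow_const 2
  · refine (lintegral_enorm_sum_convolution_sq_le_of_integrable s hβ hB (hu n) (huM n)).trans ?_
    gcongr with k _ x
    exact enorm_le_iff_norm_le.2 (hu_le n k x)

end Orthogonality

section ConvolutionSeries

theorem enorm_tsum_add_le {ι E : Type*} [NormedAddCommGroup E] [CompleteSpace E] (a b : ι → E) :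
    ‖∑' k, (a k + b k)‖ₑ ≤ ∑' k, ‖a k‖ₑ + ‖∑' k, b k‖ₑ := by
  by_cases hsum : Summable fun k ↦ a k + b k
  swap
  · simp [tsum_eq_zero_of_not_summable hsum]
  by_cases ha : ∑' k, ‖a k‖ₑ = ∞
  · simp [ha]
  have ha' : Summable a := .of_norm (by simpa using ENNReal.summable_toReal ha)
  have hb : Summable b := by simpa using hsum.sub ha'
  rw [ha'.tsum_add hb]
  exact (enorm_add_le _ _).trans (by gcongr; exact enorm_tsum_le_tsum_enorm)

theorem le_two_rpow_mul_rpow_neg_mul {t X K : ℝ≥0∞} (ht : t ≠ 0) (ht' : t ≠ ∞) {b : ℝ}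
    (h : (t / 2) ^ b * X ≤ K) : X ≤ 2 ^ b * t ^ (-b) * K := by
  have hpow : (2 : ℝ≥0∞) ^ b * t ^ (-b) = ((t / 2) ^ b)⁻¹ := by
    rw [← ENNReal.rpow_neg, div_eq_mul_inv, ENNReal.mul_rpow_of_ne_top ht' (by simp),
      ENNReal.inv_rpow, ENNReal.rpow_neg 2, inv_inv, mul_comm]
  rw [hpow]
  refine (ENNReal.mul_le_iff_le_inv ?_ ?_).1 h
  · simp [ENNReal.rpow_eq_zero_iff, ht, ht', ENNReal.div_eq_top]
  · simp [ENNReal.rpow_eq_top_iff, ht, ht', ENNReal.div_eq_top]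

variable {ι V : Type*} [NormedAddCommGroup V] [InnerProductSpace ℝ V] [FiniteDimensional ℝ V]
  [MeasurableSpace V] [BorelSpace V]

/-- The series `∑ β_k * f_k`. At a point where one of the integrals, or the sum of the series, fails
to converge absolutely, that integral or sum takes the value `0`. -/
noncomputable def convolutionSeries (β f : ι → V → ℂ) (x : V) : ℂ :=
  ∑' k, (β k ⋆[ContinuousLinearMap.mul ℂ ℂ] f k) x

variable [Countable ι] {β f g h : ι → V → ℂ} {A B : ℝ≥0∞} {M : ℝ}

theorem lintegral_tsum_enorm_convolution_le (hβ : ∀ k, AEStronglyMeasurable (β k))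
    (hA : ∀ k, ∫⁻ x, ‖β k x‖ₑ ≤ A) (hg : ∀ k, AEStronglyMeasurable (g k)) :
    ∫⁻ x, ∑' k, ‖(β k ⋆[ContinuousLinearMap.mul ℂ ℂ] g k) x‖ₑ ≤ A * ∑' k, ∫⁻ x, ‖g k x‖ₑ := by
  rw [lintegral_tsum fun k ↦ (aestronglyMeasurable_convolution _ (hβ k) (hg k)).enorm,
    ← ENNReal.tsum_mul_left]
  refine ENNReal.tsum_le_tsum fun k ↦ (lintegral_enorm_convolution_le _ (hβ k) (hg k)).trans ?_
  rw [← ofReal_norm (ContinuousLinearMap.mul ℂ ℂ), ContinuousLinearMap.opNorm_mul,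
    ENNReal.ofReal_one, one_mul]
  gcongr
  exact hA k

theorem sq_mul_volume_lt_enorm_convolutionSeries_le (hβ : ∀ k, Integrable (β k))
    (hB : ∀ ξ, ∑' k, ‖𝓕 (β k) ξ‖ₑ ≤ B) (hh : ∀ k, AEStronglyMeasurable (h k))
    (hM : ∀ k x, ‖h k x‖ ≤ M) (t : ℝ≥0∞) :
    t ^ (2 : ℝ) * volume {x | t < ‖convolutionSeries β h x‖ₑ} ≤
      B ^ 2 * ∑' k, ∫⁻ x, ‖h k x‖ₑ ^ 2 := by
  refine rpow_mul_measure_lt_enorm_tsum_le (fun k ↦ aestronglyMeasurable_convolution _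
    (hβ k).aestronglyMeasurable (hh k)) two_pos (fun s ↦ ?_) t
  simp only [ENNReal.rpow_two]
  refine (lintegral_enorm_sum_convolution_sq_le s hβ
    (fun ξ ↦ (ENNReal.sum_le_tsum s).trans (hB ξ)) hh hM).trans ?_
  gcongr
  exact ENNReal.sum_le_tsum s

theorem ae_enorm_convolutionSeries_add_le (hβ : ∀ k, Integrable (β k))
    (hg : ∀ k, Integrable (g k)) (hh : ∀ k, AEStronglyMeasurable (h k))
    (hM : ∀ k x, ‖h k x‖ ≤ M) :
    ∀ᵐ x, ‖convolutionSeries β (g + h) x‖ₑ ≤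
      ∑' k, ‖(β k ⋆[ContinuousLinearMap.mul ℂ ℂ] g k) x‖ₑ + ‖convolutionSeries β h x‖ₑ := by
  filter_upwards [ae_all_iff.2 fun k ↦
    (hβ k).ae_convolution_exists (ContinuousLinearMap.mul ℂ ℂ) (hg k)] with x hx
  have hadd (k : ι) := (hx k).distrib_add
    (convolutionExistsAt_of_bounded (ContinuousLinearMap.mul ℂ ℂ) (hβ k) (hh k) (hM k) x)
  simp only [convolutionSeries, Pi.add_apply, hadd]
  exact enorm_tsum_add_le _ _

theorem volume_lt_enorm_convolutionSeries_add_le (hβ : ∀ k, Integrable (β k))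
    (hA : ∀ k, ∫⁻ x, ‖β k x‖ₑ ≤ A) (hB : ∀ ξ, ∑' k, ‖𝓕 (β k) ξ‖ₑ ≤ B)
    (hg : ∀ k, Integrable (g k)) (hh : ∀ k, AEStronglyMeasurable (h k))
    (hM : ∀ k x, ‖h k x‖ ≤ M) {t : ℝ≥0∞} (ht : t ≠ 0) (ht' : t ≠ ∞) :
    volume {x | t < ‖convolutionSeries β (g + h) x‖ₑ} ≤
      2 ^ (1 : ℝ) * t ^ (-1 : ℝ) * (A * ∑' k, ∫⁻ x, ‖g k x‖ₑ) +
        2 ^ (2 : ℝ) * t ^ (-2 : ℝ) * (B ^ 2 * ∑' k, ∫⁻ x, ‖h k x‖ₑ ^ 2) := by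
  set G : V → ℝ≥0∞ := fun x ↦ ∑' k, ‖(β k ⋆[ContinuousLinearMap.mul ℂ ℂ] g k) x‖ₑ
  have hG : AEMeasurable G := AEMeasurable.tsum fun k ↦ (aestronglyMeasurable_convolution _
    (hβ k).aestronglyMeasurable (hg k).aestronglyMeasurable).enorm
  have hchebyshev : (t / 2) ^ (1 : ℝ) * volume {x | t / 2 ≤ G x} ≤
      A * ∑' k, ∫⁻ x, ‖g k x‖ₑ := by
    rw [ENNReal.rpow_one]
    exact (mul_meas_ge_le_lintegral₀ hG _).trans (lintegral_tsum_enorm_convolution_le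
      (fun k ↦ (hβ k).aestronglyMeasurable) hA fun k ↦ (hg k).aestronglyMeasurable)
  calc volume {x | t < ‖convolutionSeries β (g + h) x‖ₑ}
      ≤ volume ({x | t / 2 ≤ G x} ∪ {x | t / 2 < ‖convolutionSeries β h x‖ₑ}) := by
        refine measure_mono_ae ?_
        filter_upwards [ae_enorm_convolutionSeries_add_le hβ hg hh hM] with x hx hlt
        change t / 2 ≤ G x ∨ t / 2 < ‖convolutionSeries β h x‖ₑ
        by_contra! hcon
        exact (hlt.trans_le hx).not_ge <|
          (add_le_add hcon.1.le hcon.2).trans_eq (ENNReal.add_halves t)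
    _ ≤ volume {x | t / 2 ≤ G x} + volume {x | t / 2 < ‖convolutionSeries β h x‖ₑ} :=
        measure_union_le _ _
    _ ≤ _ := add_le_add (le_two_rpow_mul_rpow_neg_mul ht ht' hchebyshev)
        (le_two_rpow_mul_rpow_neg_mul ht ht'
          (sq_mul_volume_lt_enorm_convolutionSeries_le hβ hB hh hM _))

end ConvolutionSeries

section AlmostOrthogonality

theorem lintegral_enorm_indicator_rpow {α E : Type*} [MeasurableSpace α] {μ : Measure α}
    [NormedAddCommGroup E] {s : Set α} (hs : MeasurableSet s) {a : ℝ} (ha : 0 < a) (f : α → E) :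
    ∫⁻ x, ‖s.indicator f x‖ₑ ^ a ∂μ = ∫⁻ x in s, ‖f x‖ₑ ^ a ∂μ := by
  rw [← lintegral_indicator hs]
  refine lintegral_congr fun x ↦ ?_
  by_cases hx : x ∈ s <;> simp [hx, ha]

theorem setLIntegral_enorm_uncurry_rpow {ι α E : Type*} [MeasurableSpace ι]
    [MeasurableSingletonClass ι] [MeasurableSpace α] {μ : Measure α} [SFinite μ]
    [NormedAddCommGroup E] [MeasurableSpace E] [OpensMeasurableSpace E] {f : ι → α → E}
    (hf : Measurable (Function.uncurry f)) {s : Set (ι × α)} (hs : MeasurableSet s) {a : ℝ}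
    (ha : 0 < a) :
    ∫⁻ z in s, ‖Function.uncurry f z‖ₑ ^ a ∂(Measure.count.prod μ) =
      ∑' k, ∫⁻ x, ‖(Prod.mk k ⁻¹' s).indicator (f k) x‖ₑ ^ a ∂μ := by
  rw [← lintegral_indicator hs, lintegral_prod _ ((hf.enorm.pow_const a).indicator hs).aemeasurable,
    lintegral_count]
  refine tsum_congr fun k ↦ ?_
  rw [lintegral_enorm_indicator_rpow (measurable_prodMk_left hs) ha,
    ← lintegral_indicator (measurable_prodMk_left hs)]
  rfl

variable {ι V : Type*} [Countable ι] [NormedAddCommGroup V] [InnerProductSpace ℝ V]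
  [FiniteDimensional ℝ V] [MeasurableSpace V] [BorelSpace V] {β f : ι → V → ℂ} {A B : ℝ≥0∞}

theorem truncationBound_convolutionSeries [MeasurableSpace ι] [MeasurableSingletonClass ι]
    (hβ : ∀ k, Integrable (β k)) (hA₀ : A ≠ 0) (hA : ∀ k, ∫⁻ x, ‖β k x‖ₑ ≤ A)
    (hB : ∀ ξ, ∑' k, ‖𝓕 (β k) ξ‖ₑ ≤ B) (hf : ∀ k, Measurable (f k)) :
    TruncationBound (Measure.count.prod volume) volume 1 2 (2 ^ (1 : ℝ) * A)
      (2 ^ (2 : ℝ) * B ^ 2) (Function.uncurry f) (convolutionSeries β f) := by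
  intro t ht ht'
  have hf_prod : Measurable (Function.uncurry f) := measurable_from_prod_countable_right hf
  set s : Set (ι × V) := {z | t < ‖Function.uncurry f z‖ₑ}
  have hs : MeasurableSet s := measurableSet_lt measurable_const hf_prod.enorm
  have hs_compl : {z | ‖Function.uncurry f z‖ₑ ≤ t} = sᶜ := by ext; simp [s]
  set g : ι → V → ℂ := fun k ↦ (Prod.mk k ⁻¹' s).indicator (f k)
  set h : ι → V → ℂ := fun k ↦ (Prod.mk k ⁻¹' sᶜ).indicator (f k)
  have hgh : g + h = f := funext fun k ↦ indicator_self_add_compl (Prod.mk k ⁻¹' s) (f k)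
  have hh_meas (k : ι) : AEStronglyMeasurable (h k) :=
    ((hf k).indicator (measurable_prodMk_left hs.compl)).aestronglyMeasurable
  have hh_le (k : ι) (x : V) : ‖h k x‖ ≤ t.toReal := by
    rw [← toReal_enorm]
    refine ENNReal.toReal_mono ht' ?_
    by_cases hx : (k, x) ∈ s
    · simp [h, hx]
    · exact (congrArg enorm (indicator_of_mem hx (f k))).trans_le (not_lt.1 hx)
  rw [hs_compl, setLIntegral_enorm_uncurry_rpow hf_prod hs one_pos,
    setLIntegral_enorm_uncurry_rpow hf_prod hs.compl two_pos]
  simp only [ENNReal.rpow_one, ENNReal.rpow_two]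
  by_cases hg_top : ∑' k, ∫⁻ x, ‖g k x‖ₑ = ∞
  · simp [g, hg_top, hA₀, ENNReal.mul_top, ht, ht']
  have hg (k : ι) : Integrable (g k) :=
    ⟨((hf k).indicator (measurable_prodMk_left hs)).aestronglyMeasurable,
      (ENNReal.ne_top_of_tsum_ne_top hg_top k).lt_top⟩
  have hsplit := volume_lt_enorm_convolutionSeries_add_le hβ hA hB hg hh_meas hh_le ht ht'
  rw [hgh] at hsplit
  refine hsplit.trans_eq ?_
  simp only [g, h, ENNReal.rpow_one, ENNReal.rpow_two]
  ring

theorem lorentzNorm_convolutionSeries_le (hβ : ∀ k, Integrable (β k)) (hA₀ : A ≠ 0)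
    (hA : ∀ k, ∫⁻ x, ‖β k x‖ₑ ≤ A) (hB : ∀ ξ, ∑' k, ‖𝓕 (β k) ξ‖ₑ ≤ B)
    (hf : ∀ k, Measurable (f k)) {p : ℝ} (hp : 0 < p) {q : ℝ≥0∞} (hpq : ENNReal.ofReal p ≤ q) :
    lorentzNorm volume p q (convolutionSeries β f) ≤
      ((4 * A + 16 * B ^ 2) * ∑' n, interpolationKernel 1 2 p n) ^ (1 / p) *
        (∑' k, lorentzNorm volume p q (f k) ^ p) ^ (1 / p) := by
  let _ : MeasurableSpace ι := ⊤
  have hf_prod : Measurable (Function.uncurry f) := measurable_from_prod_countable_right hf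
  have hconst : (2 : ℝ≥0∞) ^ (1 : ℝ) * (2 ^ (1 : ℝ) * A) + 2 ^ (2 : ℝ) * (2 ^ (2 : ℝ) * B ^ 2) =
      4 * A + 16 * B ^ 2 := by
    rw [ENNReal.rpow_one, ENNReal.rpow_two]
    ring
  calc lorentzNorm volume p q (convolutionSeries β f)
      ≤ ((4 * A + 16 * B ^ 2) * ∑' n, interpolationKernel 1 2 p n) ^ (1 / p) *
          lorentzNorm (Measure.count.prod volume) p q (Function.uncurry f) := by
        rw [← hconst]
        exact lorentzNorm_le_of_truncationBound hf_prod one_pos one_le_two hp hpq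
          (truncationBound_convolutionSeries hβ hA₀ hA hB hf)
    _ ≤ _ := by
        gcongr
        exact lorentzNorm_count_prod_le hf_prod hp hpq

variable (ι V) in
theorem statement0_general {p : ℝ} (hp1 : 1 < p) (hp2 : p < 2) (A B : ℝ) :
    ∃ C : ℝ, 0 < C ∧ ∀ q : ℝ≥0∞, ENNReal.ofReal p ≤ q → ∀ β : ι → V → ℂ,
      (∀ k, Integrable (β k)) → (∀ k, ∫ x, ‖β k x‖ ≤ A) →
      (∀ ξ, ∑' k, ‖𝓕 (β k) ξ‖ₑ ≤ ENNReal.ofReal B) →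
      ∀ f : ι → V → ℂ, (∀ k, Measurable (f k)) →
        lorentzNorm volume p q (convolutionSeries β f) ≤
          ENNReal.ofReal C * (∑' k, lorentzNorm volume p q (f k) ^ p) ^ (1 / p) := by
  have hp : 0 < p := zero_lt_one.trans hp1
  -- With `A = 0` the `L¹` bound `A * ∞` of a non-integrable part would degenerate to `0`.
  set A' : ℝ≥0∞ := max (ENNReal.ofReal A) 1
  set C : ℝ≥0∞ :=
    ((4 * A' + 16 * ENNReal.ofReal B ^ 2) * ∑' n, interpolationKernel 1 2 p n) ^ (1 / p)
  have hA'₀ : A' ≠ 0 := (zero_lt_one.trans_le (le_max_right _ _)).ne'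
  have hC : C ≠ ∞ := ENNReal.rpow_ne_top_of_nonneg (by positivity) <|
    ENNReal.mul_ne_top (by finiteness) (tsum_interpolationKernel_ne_top hp1 hp2)
  refine ⟨C.toReal + 1, by positivity, fun q hpq β hβ hA hB f hf ↦ ?_⟩
  have hA' (k : ι) : ∫⁻ x, ‖β k x‖ₑ ≤ A' := by
    rw [← ofReal_integral_norm_eq_lintegral_enorm (hβ k)]
    exact (ENNReal.ofReal_le_ofReal (hA k)).trans (le_max_left _ _)
  refine (lorentzNorm_convolutionSeries_le hβ hA'₀ hA' hB hf hp hpq).trans ?_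
  gcongr
  exact (ENNReal.le_ofReal_iff_toReal_le hC (by positivity)).2 (by linarith)

end AlmostOrthogonality

/-- Almost orthogonality: if `sup_k ‖β_k‖_{L¹} ≤ A` and `sup_ξ Σ_k |β̂_k(ξ)| ≤ B`,
then `‖Σ_k β_k * f_k‖_{L^{p,q}} ≤ C (Σ_k ‖f_k‖_{L^{p,q}}^p)^{1/p}` for `1 < p < 2`,
`p ≤ q ≤ ∞`. -/
theorem statement0 (d : ℕ) (hd : 1 ≤ d) (p : ℝ) (hp1 : 1 < p) (hp2 : p < 2)
    (q : ℝ≥0∞) (hpq : ENNReal.ofReal p ≤ q) (A B : ℝ) :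
    ∃ C : ℝ, 0 < C ∧
      ∀ (β : ℤ → EuclideanSpace ℝ (Fin d) → ℂ),
        (∀ k, Integrable (β k)) →
        (∀ k, (∫ x, ‖β k x‖) ≤ A) →
        (∀ ξ, (∑' k : ℤ, (‖𝓕 (β k) ξ‖₊ : ℝ≥0∞)) ≤ ENNReal.ofReal B) →
        ∀ f : ℤ → EuclideanSpace ℝ (Fin d) → ℂ, (∀ k, Measurable (f k)) →
          lorentzNorm volume p q
              (fun x => ∑' k : ℤ, (β k ⋆[ContinuousLinearMap.mul ℂ ℂ] f k) x) ≤
            ENNReal.ofReal C *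
              (∑' k : ℤ, (lorentzNorm volume p q (f k)) ^ p) ^ (1 / p) := by
  obtain ⟨C, hC, h⟩ := statement0_general ℤ (EuclideanSpace ℝ (Fin d)) hp1 hp2 A B
  exact ⟨C, hC, h q hpq⟩
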